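/- Let ρ and ε be real numbers with 0 < ρ < ε ≤ 1/√3. Set ℓ = ⌈ ln(1/(ε²π_*)) / (4 ln(ε/ρ)) ⌉, k = ⌈ (1/ε)^{2ℓ} ⌉, and R = kℓ + 1. Let K' = K − 𝟙πᵀ, where 𝟙πᵀ ∈ ℝ^{V×V} is the rank-one matrix whose (u,v) entry is π(v), and suppose the ℓ²→ℓ² operator norm of (K')^{2ℓ} is at most ρ^{2ℓ}. Then the symmetric matrix (5ε/2)·Π + (1/m)·A is a 2R-local sum of PSD matrices. In particular, for every x ∈ {−1,+1}^V one has Σ_{u,v} A_{uv}x_ux_v ≥ −(5ε/2)·m, so the fraction of edge weight cut by the partition determined by x, namely (1/2) − (1/(2m))Σ_{u,v} A_{uv}x_ux_v, is at most 1/2 + (5/4)ε. -/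

import Mathlib

section WeightedGraph

variable {V : Type*} [Fintype V] [DecidableEq V] [Nonempty V]

/-- The (weighted) degree `deg(u) = ∑_v A_{uv}` of a weighted graph `A`. -/
noncomputable def gdeg (A : Matrix V V ℝ) (u : V) : ℝ := ∑ v, A u v

/-- The total weight `m = ∑_u deg(u)`. -/
noncomputable def gm (A : Matrix V V ℝ) : ℝ := ∑ u, gdeg A u

/-- The stationary distribution `π(u) = deg(u)/m` of the random walk on `A`. -/
noncomputable def gpi (A : Matrix V V ℝ) (u : V) : ℝ := gdeg A u / gm A

/-- `π_* = min_u π(u)`. -/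
noncomputable def gpiStar (A : Matrix V V ℝ) : ℝ :=
  Finset.univ.inf' Finset.univ_nonempty (gpi A)

/-- The random-walk transition matrix `K = D⁻¹A`, i.e. `K_{uv} = A_{uv}/deg(u)`. -/
noncomputable def gK (A : Matrix V V ℝ) : Matrix V V ℝ :=
  Matrix.of fun u v => A u v / gdeg A u

/-- The `ℓ² → ℓ²` operator norm (spectral norm) of a real square matrix. -/
noncomputable def l2opNorm (M : Matrix V V ℝ) : ℝ :=
  ‖Matrix.toEuclideanCLM (𝕜 := ℝ) M‖

/-- A symmetric matrix `M` is an `R`-local sum of PSD matrices if it is a finite sum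
`M = ∑ i, M_i` of positive semidefinite matrices, each supported on a set `S_i` of at
most `R` rows/columns.  This is exactly derivability of `xᵀMx ≥ 0` in the `R`-local,
degree-2 static sum-of-squares proof system. -/
def IsLocalPSDSum (R : ℕ) (M : Matrix V V ℝ) : Prop :=
  ∃ (n : ℕ) (Ms : Fin n → Matrix V V ℝ) (Ss : Fin n → Finset V),
    M = ∑ i, Ms i ∧ (∀ i, (Ms i).PosSemidef) ∧ (∀ i, (Ss i).card ≤ R) ∧
    (∀ i u v, Ms i u v ≠ 0 → u ∈ Ss i ∧ v ∈ Ss i)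

end WeightedGraph

/-!
All quadratic forms are taken on `ℓ²(π)`. A reversible kernel `P` is self-adjoint there, so `P²` is
nonnegative, but its sum-of-squares certificate, one square per row of `P`, is not local. Replacing
a row by the average of `N + 1` independent random signed basis vectors, each scaled to have that
row as mean, makes every square local. After rescaling, the variance costs an additive multiple
`‖P‖² / N` of the identity, where `‖P‖` is the maximal absolute row sum.

With `K = J + K'`, where `J = 𝟙πᵀ = J²`, the first summand is already a square. For the second put
`s = K' / ε`, so that `2 s = (1 + s)² - 1 - s²`. The term `-s²` is bounded below by the inequality
of arithmetic and geometric means `l s² ≤ l - 1 + s ^ (2 l)`, whose difference of sides is an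
explicit nonnegative combination of the squares of `s ^ j - s ^ (j + 2)`. All these squares are
sampled. The remainder `s ^ (2 l)` has small absolute row sums: passing from the spectral norm to
row sums costs a factor `√|V|`, which the walk length `l` is chosen to absorb. Hence it is
dominated by the identity through squares in two variables.
-/

open Matrix

lemma abs_mul_sign_mul_sign {α : Type*} [Ring α] [LinearOrder α] [IsStrictOrderedRing α] (x : α) :
    |x| * (SignType.sign x * SignType.sign x : α) = |x| := by
  rw [← mul_assoc, abs_mul_sign, self_mul_sign]

/-! ### The cone of local sums of positive semidefinite matrices -/

namespace IsLocalPSDSum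

variable {V : Type*} {R : ℕ} {M N : Matrix V V ℝ}

lemma of_fintype {ι : Type*} [Fintype ι] (Ms : ι → Matrix V V ℝ) (Ss : ι → Finset V)
    (hM : ∀ i, (Ms i).PosSemidef) (hS : ∀ i, (Ss i).card ≤ R)
    (hMS : ∀ i u v, Ms i u v ≠ 0 → u ∈ Ss i ∧ v ∈ Ss i) : IsLocalPSDSum R (∑ i, Ms i) :=
  let e := (Fintype.equivFin ι).symm
  ⟨Fintype.card ι, Ms ∘ e, Ss ∘ e, (e.sum_comp Ms).symm,
    fun i => hM (e i), fun i => hS (e i), fun i => hMS (e i)⟩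

lemma zero (R : ℕ) : IsLocalPSDSum R (0 : Matrix V V ℝ) := by
  simpa using of_fintype (R := R) (fun _ : Empty => (0 : Matrix V V ℝ)) (fun _ => ∅)
    (fun i => i.elim) (fun i => i.elim) (fun i => i.elim)

lemma add (hM : IsLocalPSDSum R M) (hN : IsLocalPSDSum R N) : IsLocalPSDSum R (M + N) := by
  obtain ⟨m, Ms, Ss, rfl, hMs, hSs, hMSs⟩ := hM
  obtain ⟨n, Ns, Ts, rfl, hNs, hTs, hNTs⟩ := hN
  simpa [Fintype.sum_sum_type] using of_fintype (R := R) (Sum.elim Ms Ns) (Sum.elim Ss Ts)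
    (Sum.forall.2 ⟨hMs, hNs⟩) (Sum.forall.2 ⟨hSs, hTs⟩) (Sum.forall.2 ⟨hMSs, hNTs⟩)

lemma sum {ι : Type*} (s : Finset ι) {M : ι → Matrix V V ℝ}
    (h : ∀ i ∈ s, IsLocalPSDSum R (M i)) : IsLocalPSDSum R (∑ i ∈ s, M i) :=
  Finset.sum_induction M (IsLocalPSDSum R) (fun _ _ => add) (zero R) h

lemma smul {c : ℝ} (hc : 0 ≤ c) (hM : IsLocalPSDSum R M) : IsLocalPSDSum R (c • M) := by
  obtain ⟨n, Ms, Ss, rfl, hMs, hSs, hMSs⟩ := hM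
  exact ⟨n, fun i => c • Ms i, Ss, Finset.smul_sum, fun i => (hMs i).smul hc, hSs,
    fun i u v h => hMSs i u v (right_ne_zero_of_mul (a := c) h)⟩

lemma mono {R' : ℕ} (hR : R ≤ R') (hM : IsLocalPSDSum R M) : IsLocalPSDSum R' M := by
  obtain ⟨n, Ms, Ss, rfl, hMs, hSs, hMSs⟩ := hM
  exact ⟨n, Ms, Ss, rfl, hMs, fun i => (hSs i).trans hR, hMSs⟩

lemma posSemidef (hM : IsLocalPSDSum R M) : M.PosSemidef := by
  obtain ⟨n, Ms, Ss, rfl, hMs, -, -⟩ := hM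
  exact posSemidef_sum _ fun i _ => hMs i

variable [Finite V]

lemma vecMulVec_self {a : V → ℝ} {S : Finset V} (hS : S.card ≤ R) (ha : ∀ v ∉ S, a v = 0) :
    IsLocalPSDSum R (vecMulVec a a) := by
  refine ⟨1, fun _ => vecMulVec a a, fun _ => S, by simp, fun _ => ?_, fun _ => hS, ?_⟩
  · simpa using posSemidef_vecMulVec_self_star a
  · intro _ u v h
    exact ⟨not_imp_comm.1 (ha u) (left_ne_zero_of_mul h),
      not_imp_comm.1 (ha v) (right_ne_zero_of_mul h)⟩

end IsLocalPSDSum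

namespace IsLocalPSDSum

variable {V : Type*} [DecidableEq V] {R : ℕ}

lemma diagonal [Finite V] (hR : 1 ≤ R) {d : V → ℝ} (hd : ∀ v, 0 ≤ d v) :
    IsLocalPSDSum R (diagonal d) := by
  cases nonempty_fintype V
  have hdecomp : Matrix.diagonal d
      = ∑ v, d v • vecMulVec (Pi.single v (1 : ℝ)) (Pi.single v (1 : ℝ)) := by
    simp [← single_eq_single_vecMulVec_single, sum_single_eq_diagonal]
  rw [hdecomp]
  refine sum _ fun v _ => smul (hd v) (vecMulVec_self (S := {v}) (by simpa using hR) ?_)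
  simp +contextual

/-- The domination is witnessed by the two-variable squares
`|S u v| (x u + sign (S u v) x v) ^ 2 / 2`. -/
lemma diagonal_add [Fintype V] (hR : 2 ≤ R) {d : V → ℝ} {S : Matrix V V ℝ} (hS : S.IsSymm)
    (hd : ∀ u, ∑ v, |S u v| ≤ d u) : IsLocalPSDSum R (Matrix.diagonal d + S) := by
  let b (u v : V) : V → ℝ := Pi.single u 1 + (SignType.sign (S u v) : ℝ) • Pi.single v 1
  have hsquare (u v : V) : (|S u v| / 2) • vecMulVec (b u v) (b u v)
      = single u u (|S u v| / 2) + single v v (|S u v| / 2)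
        + (single u v (S u v / 2) + single v u (S u v / 2)) := by
    simp only [b, add_vecMulVec, vecMulVec_add, smul_vecMulVec, vecMulVec_smul,
      ← single_eq_single_vecMulVec_single, smul_add, smul_single, smul_eq_mul, mul_one,
      div_mul_eq_mul_div, abs_mul_sign_mul_sign, abs_mul_sign]
    abel
  have hdecomp : Matrix.diagonal d + S = Matrix.diagonal (fun u => d u - ∑ v, |S u v|)
      + ∑ u, ∑ v, (|S u v| / 2) • vecMulVec (b u v) (b u v) := by
    have hdiag : ∑ u, ∑ v, single u u (|S u v| / 2)
        = Matrix.diagonal fun u => (∑ v, |S u v|) / 2 := by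
      simp only [← sum_single_eq_diagonal, Finset.sum_div, ← singleAddMonoidHom_apply, map_sum]
    have hdiag' : ∑ u, ∑ v, single v v (|S u v| / 2)
        = Matrix.diagonal fun u => (∑ v, |S u v|) / 2 := by
      rw [Finset.sum_comm, ← hdiag]
      simp only [hS.apply]
    have hoff : ∑ u, ∑ v, single u v (S u v / 2) = (1 / 2 : ℝ) • S := by
      conv_rhs => rw [matrix_eq_sum_single S]
      simp only [Finset.smul_sum, smul_single, smul_eq_mul, one_div_mul_eq_div]
    have hoff' : ∑ u, ∑ v, single v u (S u v / 2) = (1 / 2 : ℝ) • S := by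
      rw [Finset.sum_comm, ← hoff]
      simp only [hS.apply]
    simp only [hsquare, Finset.sum_add_distrib, hdiag, hdiag', hoff, hoff']
    rw [← add_smul, add_halves, one_smul, ← add_assoc, Matrix.diagonal_add, Matrix.diagonal_add]
    simp only [add_halves, sub_add_cancel]
  rw [hdecomp]
  refine (diagonal (one_le_two.trans hR) fun u => sub_nonneg.2 (hd u)).add <|
    sum _ fun u _ => sum _ fun v _ => smul (by positivity) <|
      vecMulVec_self (S := {u, v}) (Finset.card_le_two.trans hR) fun w hw => ?_
  simp only [Finset.mem_insert, Finset.mem_singleton, not_or] at hw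
  simp [b, hw.1, hw.2]

end IsLocalPSDSum

/-! ### Sparse sampling of a rank-one form -/

section Sampling

variable {V : Type*}

/-- The bias-variance decomposition of the second moment of `w + z` for a random vector `z`. -/
lemma sum_smul_vecMulVec_add_self {ι R : Type*} [Fintype ι] [CommRing R] {q : ι → R}
    (hq : ∑ i, q i = 1) (z : ι → V → R) (w : V → R) :
    ∑ i, q i • vecMulVec (w + z i) (w + z i)
      = vecMulVec (w + ∑ i, q i • z i) (w + ∑ i, q i • z i)
        + (∑ i, q i • vecMulVec (z i) (z i)
          - vecMulVec (∑ i, q i • z i) (∑ i, q i • z i)) := by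
  have hw : ∑ i, q i • vecMulVec w w = vecMulVec w w := by rw [← Finset.sum_smul, hq, one_smul]
  have hwz : ∑ i, q i • vecMulVec w (z i) = vecMulVec w (∑ i, q i • z i) := by
    ext u v
    simp [Matrix.sum_apply, vecMulVec_apply, Finset.mul_sum, mul_left_comm]
  have hzw : ∑ i, q i • vecMulVec (z i) w = vecMulVec (∑ i, q i • z i) w := by
    ext u v
    simp [Matrix.sum_apply, vecMulVec_apply, Finset.sum_mul, mul_assoc]
  simp only [add_vecMulVec, vecMulVec_add, smul_add, Finset.sum_add_distrib, hw, hwz, hzw]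
  abel

/-- The matrix is the expectation of `w wᵀ` for `w = a + z₁ + ⋯ + z_N` with independent copies `zⱼ`
of the random vector that equals `z i` with probability `q i`. Every outcome of `w` is supported on
at most `S.card + N * r` points. -/
lemma isLocalPSDSum_sampling [Finite V] {ι : Type*} [Fintype ι] {q : ι → ℝ} (hq0 : ∀ i, 0 ≤ q i)
    (hq1 : ∑ i, q i = 1) {z : ι → V → ℝ} {T : ι → Finset V} {r : ℕ} (hT : ∀ i, (T i).card ≤ r)
    (hz : ∀ i, ∀ v ∉ T i, z i v = 0) (N : ℕ) {S : Finset V} {a : V → ℝ} (ha : ∀ v ∉ S, a v = 0) :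
    IsLocalPSDSum (S.card + N * r)
      (vecMulVec (a + (N : ℝ) • ∑ i, q i • z i) (a + (N : ℝ) • ∑ i, q i • z i)
        + (N : ℝ) • (∑ i, q i • vecMulVec (z i) (z i)
          - vecMulVec (∑ i, q i • z i) (∑ i, q i • z i))) := by
  classical
  set y := ∑ i, q i • z i with hy
  set C := ∑ i, q i • vecMulVec (z i) (z i) - vecMulVec y y with hC
  induction N generalizing S a with
  | zero => simpa using IsLocalPSDSum.vecMulVec_self le_rfl ha
  | succ N ih =>
    have haverage : vecMulVec (a + ((N + 1 : ℕ) : ℝ) • y) (a + ((N + 1 : ℕ) : ℝ) • y)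
          + ((N + 1 : ℕ) : ℝ) • C
        = ∑ i, q i • (vecMulVec (a + z i + (N : ℝ) • y) (a + z i + (N : ℝ) • y)
          + (N : ℝ) • C) := by
      have h := sum_smul_vecMulVec_add_self hq1 z (a + (N : ℝ) • y)
      rw [← hy, ← hC] at h
      simp only [add_right_comm a _ ((N : ℝ) • y), smul_add (M := ℝ) (A := Matrix V V ℝ),
        Finset.sum_add_distrib, ← Finset.sum_smul, hq1, one_smul, h]
      rw [Nat.cast_succ, add_smul, one_smul, add_smul, one_smul, ← add_assoc a, add_assoc _ C,
        add_comm C]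
    rw [haverage]
    refine IsLocalPSDSum.sum _ fun i _ => IsLocalPSDSum.smul (hq0 i) ?_
    refine (ih (S := S ∪ T i) (a := a + z i) fun v hv => ?_).mono ?_
    · rw [Finset.notMem_union] at hv
      simp [ha v hv.1, hz i v hv.2]
    · have hcard := Finset.card_union_le S (T i)
      have hTi := hT i
      rw [add_one_mul]
      omega

variable [Fintype V] [DecidableEq V]

/-- Sample, with probability proportional to `|y v|`, the `v`-th basis vector with the sign of
`y v`, scaled so that the mean is `y`. -/
lemma isLocalPSDSum_vecMulVec_self_add_diagonal (y : V → ℝ) {N : ℕ} (hN : N ≠ 0) :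
    IsLocalPSDSum (N + 1)
      (vecMulVec y y + ((∑ v, |y v|) / N) • diagonal fun v => |y v|) := by
  obtain rfl | hy := eq_or_ne y 0
  · simpa using IsLocalPSDSum.zero (V := V) (N + 1)
  have hc : 0 < ∑ v, |y v| := by
    obtain ⟨v, hv⟩ := Function.ne_iff.1 hy
    exact Finset.sum_pos' (fun v _ => abs_nonneg _) ⟨v, Finset.mem_univ v, abs_pos.2 hv⟩
  set c := ∑ v, |y v| with hc_def
  let z (v : V) : V → ℝ := (c * SignType.sign (y v)) • Pi.single v 1
  have hq : ∑ v, |y v| / c = 1 := by rw [← Finset.sum_div, ← hc_def, div_self hc.ne']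
  have hmean : ∑ v, (|y v| / c) • z v = y := by
    ext w
    simp only [Finset.sum_apply, Pi.smul_apply, z, Pi.single_apply, smul_eq_mul, mul_ite, mul_one,
      mul_zero, Finset.sum_ite_eq, Finset.mem_univ, if_true]
    rw [← mul_assoc, div_mul_cancel₀ _ hc.ne', abs_mul_sign]
  have hsecond : ∑ v, (|y v| / c) • vecMulVec (z v) (z v) = c • diagonal fun v => |y v| := by
    rw [← sum_single_eq_diagonal, Finset.smul_sum]
    refine Finset.sum_congr rfl fun v _ => ?_
    simp only [z, smul_vecMulVec, vecMulVec_smul, ← single_eq_single_vecMulVec_single, smul_single,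
      smul_eq_mul, mul_one]
    congr 1
    conv_rhs => rw [← abs_mul_sign_mul_sign (y v)]
    field_simp
  have hsampling := isLocalPSDSum_sampling (fun v => by positivity) hq (z := z)
    (T := fun v => {v}) (r := 1) (fun v => by simp) (fun v w hw => by simp_all [z]) (N + 1)
    (S := ∅) (a := 0) (fun _ _ => rfl)
  rw [hmean, hsecond] at hsampling
  convert hsampling.smul (c := ((N + 1) * N : ℝ)⁻¹) (by positivity) using 1
  · rw [Finset.card_empty, zero_add, mul_one]
  · ext u v
    simp only [zero_add, Matrix.add_apply, Matrix.sub_apply, Matrix.smul_apply, vecMulVec_apply,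
      Pi.smul_apply, smul_eq_mul, Nat.cast_succ]
    field_simp
    ring

end Sampling

/-! ### Maximal absolute row sums -/

section RowSums

open scoped Matrix.Norms.Operator

variable {m n : Type*} [Fintype m] [Fintype n]

lemma sum_abs_row_le_norm (P : Matrix m n ℝ) (u : m) : ∑ v, |P u v| ≤ ‖P‖ := by
  have h := Finset.le_sup (f := fun u => ∑ v, ‖P u v‖₊) (Finset.mem_univ u)
  rw [← linfty_opNNNorm_def, ← NNReal.coe_le_coe] at h
  simpa using h

lemma norm_le_of_sum_abs_row_le {P : Matrix m n ℝ} {c : ℝ} (hc : 0 ≤ c)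
    (h : ∀ u, ∑ v, |P u v| ≤ c) : ‖P‖ ≤ c := by
  lift c to NNReal using hc
  rw [linfty_opNorm_def, NNReal.coe_le_coe]
  refine Finset.sup_le fun u _ => ?_
  rw [← NNReal.coe_le_coe]
  simpa using h u

variable [DecidableEq n]

lemma norm_le_one_of_mem_rowStochastic {P : Matrix n n ℝ} (hP : P ∈ rowStochastic ℝ n) :
    ‖P‖ ≤ 1 := by
  refine norm_le_of_sum_abs_row_le zero_le_one fun u => ?_
  rw [← sum_row_of_mem_rowStochastic hP u]
  exact Finset.sum_le_sum fun v _ => (abs_of_nonneg (nonneg_of_mem_rowStochastic hP)).le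

/-- The `ℓ¹` norm of row `u` is the `u`-th coordinate of the image of a sign vector. -/
lemma norm_le_l2opNorm_mul_sqrt_card (Q : Matrix n n ℝ) :
    ‖Q‖ ≤ l2opNorm Q * √(Fintype.card n) := by
  refine norm_le_of_sum_abs_row_le (by unfold l2opNorm; positivity) fun u => ?_
  let x : EuclideanSpace ℝ n := WithLp.toLp 2 fun v => (SignType.sign (Q u v) : ℝ)
  have hx : ‖x‖ ≤ √(Fintype.card n) := by
    rw [EuclideanSpace.norm_eq]
    refine Real.sqrt_le_sqrt ?_
    calc ∑ v, ‖x v‖ ^ 2 ≤ ∑ _v : n, (1 : ℝ) := by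
          refine Finset.sum_le_sum fun v _ => ?_
          rcases lt_trichotomy (Q u v) 0 with h | h | h <;> simp [x, h]
      _ = Fintype.card n := by simp
  have hrow : toEuclideanCLM (𝕜 := ℝ) Q x u = ∑ v, |Q u v| := by
    simp [x, toEuclideanCLM_toLp, Matrix.mulVec, dotProduct, self_mul_sign]
  calc ∑ v, |Q u v| ≤ ‖toEuclideanCLM (𝕜 := ℝ) Q x u‖ := hrow ▸ Real.le_norm_self _
    _ ≤ ‖toEuclideanCLM (𝕜 := ℝ) Q x‖ := PiLp.norm_apply_le _ u
    _ ≤ l2opNorm Q * ‖x‖ := ContinuousLinearMap.le_opNorm _ _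
    _ ≤ l2opNorm Q * √(Fintype.card n) := mul_le_mul_of_nonneg_left hx (norm_nonneg _)

end RowSums

/-! ### Reversible kernels -/

section Reversible

variable {V : Type*}

/-- Detailed balance of the kernel `P`, whose entries may be negative, with respect to the
weights `p`. -/
def IsReversible (p : V → ℝ) (P : Matrix V V ℝ) : Prop :=
  ∀ u v, p u * P u v = p v * P v u

namespace IsReversible

variable {p : V → ℝ} {P Q : Matrix V V ℝ}

lemma one [DecidableEq V] (p : V → ℝ) : IsReversible p 1 := fun u v => by
  obtain rfl | h := eq_or_ne u v
  · rfl
  · simp [h, h.symm]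

lemma add (hP : IsReversible p P) (hQ : IsReversible p Q) : IsReversible p (P + Q) :=
  fun u v => by simp only [Matrix.add_apply, mul_add, hP u v, hQ u v]

lemma sub (hP : IsReversible p P) (hQ : IsReversible p Q) : IsReversible p (P - Q) :=
  fun u v => by simp only [Matrix.sub_apply, mul_sub, hP u v, hQ u v]

lemma smul (c : ℝ) (hP : IsReversible p P) : IsReversible p (c • P) :=
  fun u v => by simp only [Matrix.smul_apply, mul_smul_comm, hP u v]

lemma mul_abs (hp : ∀ v, 0 ≤ p v) (hP : IsReversible p P) (u v : V) :
    p u * |P u v| = p v * |P v u| := by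
  rw [← abs_of_nonneg (hp u), ← abs_mul, hP u v, abs_mul, abs_of_nonneg (hp v)]

variable [Fintype V] [DecidableEq V]

lemma iff_semiconjBy : IsReversible p P ↔ SemiconjBy (diagonal p) P Pᵀ := by
  simp only [IsReversible, SemiconjBy, ← Matrix.ext_iff, diagonal_mul, mul_diagonal,
    transpose_apply, mul_comm]

lemma pow (hP : IsReversible p P) (t : ℕ) : IsReversible p (P ^ t) := by
  rw [iff_semiconjBy, transpose_pow] at *
  exact hP.pow_right t

lemma isSymm_diagonal_mul (hP : IsReversible p P) : (diagonal p * P).IsSymm :=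
  IsSymm.ext fun u v => by simpa only [diagonal_mul] using hP v u

lemma diagonal_mul_mul_self (hP : IsReversible p P) :
    diagonal p * (P * P) = ∑ u, p u • vecMulVec (P u) (P u) := by
  ext v w
  rw [diagonal_mul, mul_apply, Finset.mul_sum]
  simp only [Matrix.sum_apply, Matrix.smul_apply, vecMulVec_apply, smul_eq_mul, ← mul_assoc, hP v]

end IsReversible

end Reversible

/-! ### Local lower bounds for kernels -/

section LocallyBddBelow

open scoped Matrix.Norms.Operator

variable {V : Type*} [Fintype V] [DecidableEq V]

/-- The lower bound `P ≥ -c` for the quadratic form `⟨x, P x⟩_p` of a kernel `P` on `ℓ²(p)`,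
certified by an `R`-local sum of positive semidefinite matrices. -/
def LocallyBddBelow (R : ℕ) (p : V → ℝ) (c : ℝ) (P : Matrix V V ℝ) : Prop :=
  IsLocalPSDSum R (c • diagonal p + diagonal p * P)

namespace LocallyBddBelow

variable {R : ℕ} {p : V → ℝ} {c d : ℝ} {P Q : Matrix V V ℝ}

lemma add (hP : LocallyBddBelow R p c P) (hQ : LocallyBddBelow R p d Q) :
    LocallyBddBelow R p (c + d) (P + Q) := by
  unfold LocallyBddBelow
  rw [add_smul, mul_add, add_add_add_comm]
  exact IsLocalPSDSum.add hP hQ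

lemma smul {a : ℝ} (ha : 0 ≤ a) (hP : LocallyBddBelow R p c P) :
    LocallyBddBelow R p (a * c) (a • P) := by
  unfold LocallyBddBelow
  rw [mul_smul, mul_smul_comm, ← smul_add]
  exact IsLocalPSDSum.smul ha hP

lemma sum {ι : Type*} (s : Finset ι) {c : ι → ℝ} {P : ι → Matrix V V ℝ}
    (h : ∀ i ∈ s, LocallyBddBelow R p (c i) (P i)) :
    LocallyBddBelow R p (∑ i ∈ s, c i) (∑ i ∈ s, P i) := by
  unfold LocallyBddBelow
  rw [Finset.sum_smul, Finset.mul_sum, ← Finset.sum_add_distrib]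
  exact IsLocalPSDSum.sum s h

lemma sub_smul_one (a : ℝ) (hP : LocallyBddBelow R p c P) :
    LocallyBddBelow R p (c + a) (P - a • 1) := by
  unfold LocallyBddBelow
  rw [add_smul, mul_sub, mul_smul_comm, mul_one, add_add_sub_cancel]
  exact hP

lemma of_le (hR : 1 ≤ R) (hp : ∀ v, 0 ≤ p v) (hcd : c ≤ d) (hP : LocallyBddBelow R p c P) :
    LocallyBddBelow R p d P := by
  have hgap : IsLocalPSDSum R (diagonal ((d - c) • p)) :=
    .diagonal hR fun v => mul_nonneg (sub_nonneg.2 hcd) (hp v)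
  convert hgap.add hP using 1
  rw [LocallyBddBelow.eq_1, diagonal_smul, ← add_assoc, ← add_smul, sub_add_cancel]

lemma of_isReversible (hR : 2 ≤ R) (hp : ∀ v, 0 ≤ p v) (hP : IsReversible p P) :
    LocallyBddBelow R p ‖P‖ P := by
  unfold LocallyBddBelow
  rw [← diagonal_smul]
  refine .diagonal_add hR hP.isSymm_diagonal_mul fun u => ?_
  simp only [diagonal_mul, abs_mul, abs_of_nonneg (hp u), ← Finset.mul_sum, Pi.smul_apply,
    smul_eq_mul]
  rw [mul_comm]
  exact mul_le_mul_of_nonneg_right (sum_abs_row_le_norm P u) (hp u)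

/-- Exactly, `P * P ≥ 0` on `ℓ²(p)`; the constant is the cost of sampling every row of `P` by
`N + 1` coordinates. -/
lemma mul_self (hp : ∀ v, 0 ≤ p v) (hP : IsReversible p P) {N : ℕ} (hN : N ≠ 0) :
    LocallyBddBelow (N + 1) p (‖P‖ ^ 2 / N) (P * P) := by
  let b (u : V) : ℝ := (∑ w, |P u w|) / N
  have hb (u : V) : b u ≤ ‖P‖ / N :=
    div_le_div_of_nonneg_right (sum_abs_row_le_norm P u) N.cast_nonneg
  let cost : V → ℝ := ∑ u, p u • b u • fun v => |P u v|
  have hcost (v : V) : cost v ≤ ‖P‖ ^ 2 / N * p v :=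
    calc cost v = ∑ u, b u * (p u * |P u v|) := by
          simp only [cost, Finset.sum_apply, Pi.smul_apply, smul_eq_mul, mul_left_comm]
      _ ≤ ∑ u, ‖P‖ / N * (p u * |P u v|) := by
          exact Finset.sum_le_sum fun u _ =>
            mul_le_mul_of_nonneg_right (hb u) (mul_nonneg (hp u) (abs_nonneg _))
      _ = ‖P‖ / N * p v * ∑ u, |P v u| := by
          simp only [hP.mul_abs hp _ v, Finset.mul_sum, mul_assoc]
      _ ≤ ‖P‖ / N * p v * ‖P‖ := by
          have := hp v
          gcongr
          exact sum_abs_row_le_norm P v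
      _ = ‖P‖ ^ 2 / N * p v := by ring
  have hsampled : ∑ u, p u • (vecMulVec (P u) (P u) + b u • diagonal fun v => |P u v|)
      = diagonal p * (P * P) + diagonal cost := by
    rw [← diagonalAddMonoidHom_apply V ℝ cost, map_sum]
    simp only [smul_add, Finset.sum_add_distrib, hP.diagonal_mul_mul_self,
      diagonalAddMonoidHom_apply, diagonal_smul]
  have hsplit : (‖P‖ ^ 2 / N) • diagonal p + diagonal p * (P * P)
      = ∑ u, p u • (vecMulVec (P u) (P u) + b u • diagonal fun v => |P u v|)
        + diagonal ((‖P‖ ^ 2 / N) • p - cost) := by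
    rw [hsampled, ← diagonal_smul, add_comm, add_assoc, Matrix.diagonal_add]
    simp only [Pi.sub_apply, add_sub_cancel]
  unfold LocallyBddBelow
  rw [hsplit]
  exact .add (.sum _ fun u _ => (isLocalPSDSum_vecMulVec_self_add_diagonal (P u) hN).smul (hp u))
    (.diagonal (Nat.le_add_left 1 N) fun v => sub_nonneg.2 (hcost v))

end LocallyBddBelow

end LocallyBddBelow

/-! ### A sum-of-squares proof of the inequality of arithmetic and geometric means -/

lemma sum_mul_sq_pow_sub_pow_add_two {R : Type*} [CommRing R] (x : R) (n : ℕ) :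
    ∑ j ∈ Finset.range n, ((n : R) - j) * (x ^ j - x ^ (j + 2)) ^ 2
      = n - (n + 1) * x ^ 2 + x ^ (2 * (n + 1)) := by
  induction n with
  | zero => simp
  | succ n ih =>
    have hshift : ∀ j ∈ Finset.range n,
        (((n + 1 : ℕ) : R) - (j + 1 : ℕ)) * (x ^ (j + 1) - x ^ (j + 1 + 2)) ^ 2
          = x ^ 2 * (((n : R) - j) * (x ^ j - x ^ (j + 2)) ^ 2) := by
      intro j _
      push_cast
      ring
    rw [Finset.sum_range_succ', Finset.sum_congr rfl hshift, ← Finset.mul_sum, ih]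
    push_cast
    ring

lemma sum_smul_sq_pow_sub_pow_add_two {B : Type*} [Ring B] [Algebra ℝ B] (x : B) (n : ℕ) :
    ∑ j ∈ Finset.range n, ((n : ℝ) - j) • (x ^ j - x ^ (j + 2)) ^ 2
      = (n : ℝ) • 1 - (n + 1 : ℝ) • x ^ 2 + x ^ (2 * (n + 1)) := by
  simpa [Algebra.smul_def] using congrArg (Polynomial.aeval (R := ℝ) x)
    (sum_mul_sq_pow_sub_pow_add_two (Polynomial.X : Polynomial ℝ) n)

/-! ### Kernels with a contracting even power -/

section Contraction

open scoped Matrix.Norms.Operator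

lemma succ_mul_pow_le_one {r : ℝ} (h0 : 0 ≤ r) (h1 : r ≤ 1 / 2) (i : ℕ) :
    ((i : ℝ) + 1) * r ^ i ≤ 1 := by
  have h : (i : ℝ) + 1 ≤ 2 ^ i := by exact_mod_cast Nat.lt_two_pow_self (n := i)
  calc ((i : ℝ) + 1) * r ^ i ≤ 2 ^ i * (1 / 2) ^ i := by gcongr
    _ = 1 := by rw [← mul_pow]; norm_num

variable {V : Type*} [Fintype V] [DecidableEq V]
variable {p : V → ℝ} {ε : ℝ} {n N : ℕ} {s T : Matrix V V ℝ}

/-- The squares in the sum-of-squares proof of `(n + 1) s² ≤ n + s ^ (2 (n + 1))` are sampled; the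
larger the weight of a square, the smaller its norm. -/
lemma locallyBddBelow_sub_sq_add_pow (hp : ∀ v, 0 ≤ p v) (hs : IsReversible p s) (hε : 0 < ε)
    (hε2 : ε ^ 2 ≤ 1 / 2) (hnorm : ∀ t, ‖s ^ t‖ ≤ 2 / ε ^ t)
    (hN : 2 * ((n : ℝ) + 1) ≤ N * ε ^ (2 * (n + 1))) :
    LocallyBddBelow (N + 1) p (2 * n / (n + 1) * (1 + ε ^ 2) ^ 2)
      ((n : ℝ) • 1 - (n + 1 : ℝ) • s ^ 2 + s ^ (2 * (n + 1))) := by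
  have hNpos : (0 : ℝ) < N := pos_of_mul_pos_left (hN.trans_lt' (by positivity)) (by positivity)
  have hterm : ∀ j ∈ Finset.range n, LocallyBddBelow (N + 1) p (2 / (n + 1) * (1 + ε ^ 2) ^ 2)
      (((n : ℝ) - j) • (s ^ j - s ^ (j + 2)) ^ 2) := by
    intro j hj
    obtain ⟨i, rfl⟩ : ∃ i, n = j + 1 + i := Nat.exists_eq_add_of_le (Finset.mem_range.1 hj)
    have hweight : ((j + 1 + i : ℕ) : ℝ) - j = i + 1 := by push_cast; ring
    have hdiff : ‖s ^ j - s ^ (j + 2)‖ ≤ 2 / ε ^ (j + 2) * (1 + ε ^ 2) :=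
      (norm_sub_le_of_le (hnorm _) (hnorm _)).trans_eq (by rw [pow_add]; field_simp; ring)
    have hsq := LocallyBddBelow.mul_self hp ((hs.pow j).sub (hs.pow (j + 2)))
      (Nat.cast_pos.1 hNpos).ne'
    rw [← sq] at hsq
    rw [hweight]
    refine (hsq.smul (a := (i : ℝ) + 1) (by positivity)).of_le (by omega) hp ?_
    calc ((i : ℝ) + 1) * (‖s ^ j - s ^ (j + 2)‖ ^ 2 / N)
        ≤ (i + 1) * ((2 / ε ^ (j + 2) * (1 + ε ^ 2)) ^ 2 / N) := by gcongr
      _ = 4 * (1 + ε ^ 2) ^ 2 * ((i + 1) * (ε ^ 2) ^ i)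
            / (N * ε ^ (2 * (j + 1 + i + 1))) := by
        have hpow : ε ^ (2 * (j + 1 + i + 1)) = (ε ^ (j + 2)) ^ 2 * (ε ^ 2) ^ i := by ring
        rw [hpow]
        field_simp
        ring
      _ ≤ 4 * (1 + ε ^ 2) ^ 2 * 1 / (2 * ((j + 1 + i : ℕ) + 1)) := by
        gcongr
        exact succ_mul_pow_le_one (sq_nonneg ε) hε2 i
      _ = 2 / ((j + 1 + i : ℕ) + 1) * (1 + ε ^ 2) ^ 2 := by field_simp; ring
  rw [← sum_smul_sq_pow_sub_pow_add_two]
  refine (LocallyBddBelow.sum _ hterm).of_le (by omega) hp (le_of_eq ?_)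
  rw [Finset.sum_const, Finset.card_range, nsmul_eq_mul]
  ring

lemma total_cost_le (hε : 0 < ε) (hε1 : ε ≤ 2 / 5) (n : ℕ) :
    ε / 2 * ((ε + 2) ^ 2 / (2 * (n + 1)))
      + ε / (2 * (n + 1)) * (2 * n / (n + 1) * (1 + ε ^ 2) ^ 2)
      + ε / (2 * (n + 1)) * ε + (ε / 2 + ε / (2 * (n + 1)) * n) ≤ 9 * ε / 4 := by
  obtain ⟨y, hy⟩ : ∃ y : ℝ, y = 1 / (n + 1) := ⟨_, rfl⟩
  have hy0 : 0 < y := by rw [hy]; positivity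
  have hy1 : y ≤ 1 := by
    rw [hy]
    exact div_le_one_of_le₀ (le_add_of_nonneg_left n.cast_nonneg) (by positivity)
  have hn : (n : ℝ) / (n + 1) = 1 - y := by rw [hy]; field_simp; ring
  calc _ = ε * (y * ((ε + 2) ^ 2 / 4 + ε / 2) + y * (1 - y) * (1 + ε ^ 2) ^ 2 + 1 - y / 2) := by
        have hε' : ε / (2 * (n + 1)) = ε / 2 * y := by rw [hy]; field_simp
        rw [← hn, hε', hy]
        field_simp
        ring
    _ ≤ ε * (y * ((2 / 5 + 2) ^ 2 / 4 + 2 / 5 / 2)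
          + y * (1 - y) * (1 + (2 / 5) ^ 2) ^ 2 + 1 - y / 2) := by
        have := sub_nonneg.2 hy1
        gcongr
    _ ≤ ε * (9 / 4) := by
        gcongr
        -- The left-hand side is largest near `y = 0.92`.
        nlinarith [sq_nonneg (y - 0.92)]
    _ = 9 * ε / 4 := by ring

/-- Write `s = ((1 + s)² - 1 - s²) / 2` and add and subtract the inequality of arithmetic and
geometric means for `s²`. -/
lemma smul_eq_sum_squares_sub {B : Type*} [Ring B] [Algebra ℝ B] {a ε : ℝ}
    (ha : a * (n + 1) = ε / 2) (s : B) :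
    ε • s = (ε / 2) • ((1 + s) * (1 + s))
      + a • ((n : ℝ) • 1 - (n + 1 : ℝ) • s ^ 2 + s ^ (2 * (n + 1)))
      + (-a) • s ^ (2 * (n + 1)) - (ε / 2 + a * n) • 1 := by
  have hexpand : (1 + s) * (1 + s) = 1 + (2 : ℝ) • s + s ^ 2 := by
    rw [two_smul]
    noncomm_ring
  have hε : ε = 2 * (a * (n + 1)) := by rw [ha]; ring
  rw [hexpand, hε]
  module

lemma locallyBddBelow_one_add_mul_self (hp : ∀ v, 0 ≤ p v) (hs : IsReversible p s) (hε : 0 < ε)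
    (hε1 : ε ≤ 1) (hnorm : ‖s‖ ≤ 2 / ε) (hN : 2 * ((n : ℝ) + 1) ≤ N * ε ^ (2 * (n + 1))) :
    LocallyBddBelow (N + 1) p ((ε + 2) ^ 2 / (2 * (n + 1))) ((1 + s) * (1 + s)) := by
  have hNpos : (0 : ℝ) < N := pos_of_mul_pos_left (hN.trans_lt' (by positivity)) (by positivity)
  refine (LocallyBddBelow.mul_self hp ((IsReversible.one p).add hs)
    (Nat.cast_pos.1 hNpos).ne').of_le (by omega) hp ?_
  calc ‖1 + s‖ ^ 2 / N ≤ (1 + 2 / ε) ^ 2 / N := by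
        gcongr
        exact norm_add_le_of_le (norm_le_one_of_mem_rowStochastic (one_mem _)) hnorm
    _ = (ε + 2) ^ 2 / (N * ε ^ 2) := by field_simp
    _ ≤ (ε + 2) ^ 2 / (2 * (n + 1)) := by
        have hε2 : ε ^ (2 * (n + 1)) ≤ ε ^ 2 := pow_le_pow_of_le_one hε.le hε1 (by omega)
        have : 2 * ((n : ℝ) + 1) ≤ N * ε ^ 2 := hN.trans (by gcongr)
        gcongr

lemma LocallyBddBelow.of_norm_pow_le (hp : ∀ v, 0 ≤ p v) (hT : IsReversible p T) (hε : 0 < ε)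
    (hε1 : ε ≤ 2 / 5) (hnorm : ∀ t, ‖T ^ t‖ ≤ 2)
    (hpow : ‖T ^ (2 * (n + 1))‖ ≤ ε * ε ^ (2 * (n + 1)))
    (hN : 2 * ((n : ℝ) + 1) ≤ N * ε ^ (2 * (n + 1))) :
    LocallyBddBelow (N + 1) p (9 * ε / 4) T := by
  have hNpos : (0 : ℝ) < N := pos_of_mul_pos_left (hN.trans_lt' (by positivity)) (by positivity)
  have hN0 : N ≠ 0 := (Nat.cast_pos.1 hNpos).ne'
  set s := ε⁻¹ • T with hs_def
  have hs : IsReversible p s := hT.smul _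
  have hsnorm (t : ℕ) : ‖s ^ t‖ = ‖T ^ t‖ / ε ^ t := by
    rw [hs_def, smul_pow, norm_smul, norm_pow, norm_inv, Real.norm_of_nonneg hε.le, inv_pow]
    ring
  set a := ε / (2 * (n + 1)) with ha
  have hdecomp : T = (ε / 2) • ((1 + s) * (1 + s))
      + a • ((n : ℝ) • 1 - (n + 1 : ℝ) • s ^ 2 + s ^ (2 * (n + 1)))
      + (-a) • s ^ (2 * (n + 1)) - (ε / 2 + a * n) • 1 := by
    nth_rw 1 [← smul_eq_sum_squares_sub (n := n) (a := a) (by rw [ha]; field_simp) s, hs_def,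
      smul_inv_smul₀ hε.ne']
  have hsbound (t : ℕ) : ‖s ^ t‖ ≤ 2 / ε ^ t :=
    (hsnorm t).trans_le (div_le_div_of_nonneg_right (hnorm t) (by positivity))
  have hsquare := (locallyBddBelow_one_add_mul_self hp hs hε (by linarith)
    (by simpa only [pow_one] using hsbound 1) hN).smul (a := ε / 2) (by positivity)
  have hamgm := (locallyBddBelow_sub_sq_add_pow hp hs hε (by nlinarith) hsbound hN).smul
    (a := a) (by positivity)
  have hrest := LocallyBddBelow.of_isReversible (R := N + 1) (by omega) hp
    ((hs.pow (2 * (n + 1))).smul (-a))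
  rw [hdecomp]
  refine (((hsquare.add hamgm).add hrest).sub_smul_one _).of_le (by omega) hp ?_
  have hrest_norm : ‖(-a) • s ^ (2 * (n + 1))‖ ≤ a * ε := by
    rw [norm_smul, norm_neg, Real.norm_of_nonneg (by positivity), hsnorm]
    gcongr
    exact div_le_of_le_mul₀ (by positivity) hε.le hpow
  calc _ ≤ _ := by gcongr
    _ ≤ 9 * ε / 4 := total_cost_le hε hε1 n

end Contraction

/-! ### Removing the stationary component of a random walk -/

section Stationary

open scoped Matrix.Norms.Operator

variable {V : Type*} {p : V → ℝ} {K P : Matrix V V ℝ}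

lemma isReversible_replicateRow (p : V → ℝ) : IsReversible p (replicateRow V p) :=
  fun u v => mul_comm (p u) (p v)

variable [Fintype V] [DecidableEq V]

lemma replicateRow_mem_rowStochastic (hp : ∀ v, 0 ≤ p v) (hp1 : ∑ v, p v = 1) :
    replicateRow V p ∈ rowStochastic ℝ V :=
  mem_rowStochastic_iff_sum.2 ⟨fun _ v => hp v, fun _ => hp1⟩

lemma mul_replicateRow_of_mem_rowStochastic (hP : P ∈ rowStochastic ℝ V) (p : V → ℝ) :
    P * replicateRow V p = replicateRow V p := by
  ext u v
  simp [mul_apply, ← Finset.sum_mul, sum_row_of_mem_rowStochastic hP]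

lemma IsReversible.replicateRow_mul (hK : IsReversible p K) (hK1 : K ∈ rowStochastic ℝ V) :
    replicateRow V p * K = replicateRow V p := by
  ext u v
  simp [mul_apply, hK _ v, ← Finset.mul_sum, sum_row_of_mem_rowStochastic hK1]

lemma IsReversible.sub_replicateRow_pow_succ (hp : ∀ v, 0 ≤ p v) (hp1 : ∑ v, p v = 1)
    (hK : IsReversible p K) (hK1 : K ∈ rowStochastic ℝ V) (t : ℕ) :
    (K - replicateRow V p) ^ (t + 1) = K ^ (t + 1) - replicateRow V p := by
  induction t with
  | zero => simp only [zero_add, pow_one]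
  | succ t ih =>
    rw [pow_succ, ih, sub_mul, mul_sub, mul_sub, ← pow_succ,
      mul_replicateRow_of_mem_rowStochastic (pow_mem hK1 _), hK.replicateRow_mul hK1,
      mul_replicateRow_of_mem_rowStochastic (replicateRow_mem_rowStochastic hp hp1), sub_self,
      sub_zero]

lemma IsReversible.norm_sub_replicateRow_pow_le_two (hp : ∀ v, 0 ≤ p v) (hp1 : ∑ v, p v = 1)
    (hK : IsReversible p K) (hK1 : K ∈ rowStochastic ℝ V) (t : ℕ) :
    ‖(K - replicateRow V p) ^ t‖ ≤ 2 := by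
  cases t with
  | zero =>
    rw [pow_zero]
    exact (norm_le_one_of_mem_rowStochastic (one_mem _)).trans one_le_two
  | succ t =>
    rw [hK.sub_replicateRow_pow_succ hp hp1 hK1, ← one_add_one_eq_two]
    exact norm_sub_le_of_le (norm_le_one_of_mem_rowStochastic (pow_mem hK1 _))
      (norm_le_one_of_mem_rowStochastic (replicateRow_mem_rowStochastic hp hp1))

/-- For `ε ≥ 2 / 5` the claim is diagonal dominance; otherwise `K` splits into its stationary part,
which is its own square, and a contracting remainder. -/
theorem LocallyBddBelow.of_norm_sub_replicateRow_pow_le (hp : ∀ v, 0 ≤ p v) (hp1 : ∑ v, p v = 1)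
    (hK : IsReversible p K) (hK1 : K ∈ rowStochastic ℝ V) {ε : ℝ} (hε : 0 < ε) {k l : ℕ}
    (hk : (1 / ε) ^ (2 * l) ≤ k)
    (hgap : ‖(K - replicateRow V p) ^ (2 * l)‖ ≤ ε * ε ^ (2 * l)) :
    LocallyBddBelow (2 * (k * l + 1)) p (5 * ε / 2) K := by
  have : Nonempty V := not_isEmpty_iff.1 fun _ => by simp at hp1
  obtain hε1 | hε1 := le_or_gt (2 / 5) ε
  · refine (LocallyBddBelow.of_isReversible (by omega) hp hK).of_le (by omega) hp ?_
    linarith [norm_le_one_of_mem_rowStochastic hK1]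
  obtain ⟨n, rfl⟩ : ∃ n, l = n + 1 := Nat.exists_eq_succ_of_ne_zero fun hl => by
    rw [hl, mul_zero, pow_zero, pow_zero, norm_one, mul_one] at hgap
    linarith
  have hN : 2 * ((n : ℝ) + 1) ≤ (2 * k * (n + 1) + 1 : ℕ) * ε ^ (2 * (n + 1)) := by
    rw [one_div, inv_pow, inv_le_iff_one_le_mul₀ (by positivity)] at hk
    calc 2 * ((n : ℝ) + 1) ≤ 2 * (n + 1) * (k * ε ^ (2 * (n + 1))) :=
          le_mul_of_one_le_right (by positivity) hk
      _ ≤ (2 * k * (n + 1) + 1 : ℕ) * ε ^ (2 * (n + 1)) := by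
          push_cast
          linarith [pow_pos hε (2 * (n + 1))]
  set J := replicateRow V p with hJ
  have hJJ : J * J = J :=
    mul_replicateRow_of_mem_rowStochastic (replicateRow_mem_rowStochastic hp hp1) p
  have hstationary := LocallyBddBelow.mul_self hp (isReversible_replicateRow p)
    (N := 2 * k * (n + 1) + 1) (by omega)
  have hcost : ‖J‖ ^ 2 / (2 * k * (n + 1) + 1 : ℕ) ≤ ε / 4 := by
    have hJ1 : ‖J‖ ^ 2 ≤ 1 := pow_le_one₀ (norm_nonneg _)
      (norm_le_one_of_mem_rowStochastic (replicateRow_mem_rowStochastic hp hp1))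
    have hε2 : ε ^ (2 * (n + 1)) ≤ ε * (2 / 5) :=
      (pow_le_pow_of_le_one hε.le (by linarith) (by omega)).trans (by nlinarith : ε ^ 2 ≤ _)
    have hNε := hN.trans (mul_le_mul_of_nonneg_left hε2 (Nat.cast_nonneg _))
    rw [div_le_iff₀ (by positivity)]
    linarith [n.cast_nonneg (α := ℝ)]
  have hremainder := LocallyBddBelow.of_norm_pow_le hp (hK.sub (isReversible_replicateRow p)) hε
    hε1.le (hK.norm_sub_replicateRow_pow_le_two hp hp1 hK1) hgap hN
  have hR : 2 * (k * (n + 1) + 1) = 2 * k * (n + 1) + 1 + 1 := by ring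
  rw [← hJ, hJJ] at hstationary
  rw [hR, ← add_sub_cancel J K]
  exact (hstationary.add hremainder).of_le (by omega) hp (by linarith)

end Stationary

/-! ### The random walk on a weighted graph -/

lemma pow_mul_sqrt_le_of_log_div_log_le {ρ ε p n : ℝ} (hρ : 0 < ρ) (hρε : ρ < ε) (hp : 0 < p)
    (hn : 0 ≤ n) (hnp : n * p ≤ 1) {l : ℕ}
    (hl : Real.log (1 / (ε ^ 2 * p)) / (4 * Real.log (ε / ρ)) ≤ l) :
    ρ ^ (2 * l) * √n ≤ ε * ε ^ (2 * l) := by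
  have hε : 0 < ε := hρ.trans hρε
  have hlog : 0 < Real.log (ε / ρ) := Real.log_pos (by rwa [one_lt_div hρ])
  have hratio : 1 / (ε ^ 2 * p) ≤ (ε / ρ) ^ (4 * l) := by
    rw [div_le_iff₀ (by positivity)] at hl
    rw [← Real.log_le_log_iff (by positivity) (by positivity), Real.log_pow]
    push_cast
    linarith
  have hpow : ρ ^ (4 * l) ≤ ε ^ 2 * p * ε ^ (4 * l) := by
    rw [div_pow, div_le_div_iff₀ (by positivity) (by positivity)] at hratio
    linarith
  refine le_of_sq_le_sq ?_ (by positivity)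
  calc (ρ ^ (2 * l) * √n) ^ 2 = ρ ^ (4 * l) * n := by
        rw [mul_pow, Real.sq_sqrt hn, ← pow_mul]
        ring_nf
    _ ≤ ε ^ 2 * p * ε ^ (4 * l) * n := by gcongr
    _ = n * p * (ε ^ 2 * ε ^ (4 * l)) := by ring
    _ ≤ ε ^ 2 * ε ^ (4 * l) := mul_le_of_le_one_left (by positivity) hnp
    _ = (ε * ε ^ (2 * l)) ^ 2 := by ring

section RandomWalk

variable {V : Type*} [Fintype V] {A : Matrix V V ℝ}

lemma gK_mem_rowStochastic [DecidableEq V] (hA0 : ∀ u v, 0 ≤ A u v)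
    (hrow : ∀ u, 0 < ∑ v, A u v) : gK A ∈ rowStochastic ℝ V := by
  refine mem_rowStochastic_iff_sum.2 ⟨fun u v => div_nonneg (hA0 u v) (hrow u).le, fun u => ?_⟩
  simp only [gK, of_apply, ← Finset.sum_div]
  exact div_self (hrow u).ne'

lemma diagonal_gpi_mul_gK [DecidableEq V] (hrow : ∀ u, 0 < ∑ v, A u v) :
    diagonal (gpi A) * gK A = (gm A)⁻¹ • A := by
  ext u v
  have hdeg : gdeg A u ≠ 0 := (hrow u).ne'
  simp only [diagonal_mul, gpi, gK, of_apply, Matrix.smul_apply, smul_eq_mul]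
  field_simp

lemma isReversible_gK (hA : A.IsSymm) (hrow : ∀ u, 0 < ∑ v, A u v) :
    IsReversible (gpi A) (gK A) := fun u v => by
  classical
  have h (u v : V) := congr_fun₂ (diagonal_gpi_mul_gK hrow) u v
  simp only [diagonal_mul, Matrix.smul_apply] at h
  rw [h, h, hA.apply]

variable [Nonempty V]

lemma gm_pos (hrow : ∀ u, 0 < ∑ v, A u v) : 0 < gm A :=
  Finset.sum_pos (fun u _ => hrow u) Finset.univ_nonempty

lemma gpi_pos (hrow : ∀ u, 0 < ∑ v, A u v) (u : V) : 0 < gpi A u :=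
  div_pos (hrow u) (gm_pos hrow)

lemma sum_gpi (hrow : ∀ u, 0 < ∑ v, A u v) : ∑ u, gpi A u = 1 := by
  simp only [gpi, ← Finset.sum_div]
  exact div_self (gm_pos hrow).ne'

lemma gpiStar_pos (hrow : ∀ u, 0 < ∑ v, A u v) : 0 < gpiStar A :=
  (Finset.lt_inf'_iff _).2 fun u _ => gpi_pos hrow u

lemma card_mul_gpiStar_le_one (hrow : ∀ u, 0 < ∑ v, A u v) : Fintype.card V * gpiStar A ≤ 1 := by
  rw [← sum_gpi hrow, ← nsmul_eq_mul]
  exact Finset.card_nsmul_le_sum _ _ _ fun u hu => Finset.inf'_le _ hu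

variable [DecidableEq V]

lemma neg_mul_gm_le_sum_of_posSemidef (hrow : ∀ u, 0 < ∑ v, A u v) {c : ℝ}
    (hM : (c • diagonal (gpi A) + (gm A)⁻¹ • A).PosSemidef) {x : V → ℝ} (hx : ∀ u, x u ^ 2 = 1) :
    -(c * gm A) ≤ ∑ u, ∑ v, A u v * x u * x v := by
  have hdiag : x ⬝ᵥ diagonal (gpi A) *ᵥ x = 1 := by
    rw [← sum_gpi hrow]
    refine Finset.sum_congr rfl fun u _ => ?_
    rw [mulVec_diagonal, mul_left_comm, ← sq, hx, mul_one]
  have hA : x ⬝ᵥ A *ᵥ x = ∑ u, ∑ v, A u v * x u * x v := by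
    simp only [dotProduct, mulVec, Finset.mul_sum]
    exact Finset.sum_congr rfl fun u _ => Finset.sum_congr rfl fun v _ => by ring
  have hquad := hM.dotProduct_mulVec_nonneg x
  rw [star_trivial, add_mulVec, smul_mulVec, smul_mulVec, dotProduct_add, dotProduct_smul,
    dotProduct_smul, hdiag, hA, smul_eq_mul, smul_eq_mul, mul_one, inv_mul_eq_div,
    ← neg_le_iff_add_nonneg', le_div_iff₀ (gm_pos hrow)] at hquad
  linarith

open scoped Matrix.Norms.Operator in
/-- The walk length `l` absorbs the factor `√|V|` between the spectral norm and row sums. -/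
lemma norm_gK_sub_stationary_pow_le (hrow : ∀ u, 0 < ∑ v, A u v) {ρ ε : ℝ} (hρ : 0 < ρ)
    (hρε : ρ < ε) {l : ℕ}
    (hl : Real.log (1 / (ε ^ 2 * gpiStar A)) / (4 * Real.log (ε / ρ)) ≤ l)
    (hop : l2opNorm ((gK A - replicateRow V (gpi A)) ^ (2 * l)) ≤ ρ ^ (2 * l)) :
    ‖(gK A - replicateRow V (gpi A)) ^ (2 * l)‖ ≤ ε * ε ^ (2 * l) :=
  (norm_le_l2opNorm_mul_sqrt_card _).trans <|
    (mul_le_mul_of_nonneg_right hop (Real.sqrt_nonneg _)).trans <|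
      pow_mul_sqrt_le_of_log_div_log_le hρ hρε (gpiStar_pos hrow) (Nat.cast_nonneg _)
        (card_mul_gpiStar_le_one hrow) hl

end RandomWalk

theorem sa_maxcut_refutation_general {V : Type*} [Fintype V] [DecidableEq V] [Nonempty V]
    (A : Matrix V V ℝ) (hA : A.IsSymm) (hA0 : ∀ u v, 0 ≤ A u v)
    (hrow : ∀ u, 0 < ∑ v, A u v)
    (ρ ε : ℝ) (hρ : 0 < ρ) (hρε : ρ < ε) (l k : ℕ)
    (hl : Real.log (1 / (ε ^ 2 * gpiStar A)) / (4 * Real.log (ε / ρ)) ≤ l)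
    (hk : (1 / ε) ^ (2 * l) ≤ k)
    (hop : l2opNorm ((gK A - Matrix.of fun _ v => gpi A v) ^ (2 * l)) ≤ ρ ^ (2 * l)) :
    IsLocalPSDSum (2 * (k * l + 1))
      ((5 * ε / 2) • Matrix.diagonal (gpi A) + (gm A)⁻¹ • A) ∧
    ∀ x : V → ℝ, (∀ u, x u = 1 ∨ x u = -1) →
      -((5 * ε / 2) * gm A) ≤ ∑ u, ∑ v, A u v * x u * x v ∧
      1 / 2 - (1 / (2 * gm A)) * ∑ u, ∑ v, A u v * x u * x v
        ≤ 1 / 2 + (5 / 4) * ε := by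
  have hlocal : IsLocalPSDSum (2 * (k * l + 1))
      ((5 * ε / 2) • diagonal (gpi A) + (gm A)⁻¹ • A) := by
    rw [← diagonal_gpi_mul_gK hrow]
    exact LocallyBddBelow.of_norm_sub_replicateRow_pow_le (fun v => (gpi_pos hrow v).le)
      (sum_gpi hrow) (isReversible_gK hA hrow) (gK_mem_rowStochastic hA0 hrow) (hρ.trans hρε) hk
      (norm_gK_sub_stationary_pow_le hrow hρ hρε hl hop)
  refine ⟨hlocal, fun x hx => ?_⟩
  have hcut := neg_mul_gm_le_sum_of_posSemidef hrow hlocal.posSemidef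
    fun u => sq_eq_one_iff.2 (hx u)
  have hfraction := div_le_div_of_nonneg_right hcut (gm_pos hrow).le
  rw [neg_div, mul_div_cancel_right₀ _ (gm_pos hrow).ne'] at hfraction
  refine ⟨hcut, ?_⟩
  rw [one_div_mul_eq_div, mul_comm 2, ← div_div]
  linarith

theorem sa_maxcut_refutation {V : Type*} [Fintype V] [DecidableEq V] [Nonempty V]
    (A : Matrix V V ℝ) (hA : A.IsSymm) (hA0 : ∀ u v, 0 ≤ A u v)
    (hrow : ∀ u, 0 < ∑ v, A u v)
    (ρ ε : ℝ) (hρ : 0 < ρ) (hρε : ρ < ε) (hε : ε ≤ 1 / Real.sqrt 3)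
    (l k : ℕ)
    (hl : l = ⌈Real.log (1 / (ε ^ 2 * gpiStar A)) / (4 * Real.log (ε / ρ))⌉₊)
    (hk : k = ⌈(1 / ε) ^ (2 * l)⌉₊)
    (hop : l2opNorm ((gK A - Matrix.of fun _ v => gpi A v) ^ (2 * l)) ≤ ρ ^ (2 * l)) :
    IsLocalPSDSum (2 * (k * l + 1))
      ((5 * ε / 2) • Matrix.diagonal (gpi A) + (gm A)⁻¹ • A) ∧
    ∀ x : V → ℝ, (∀ u, x u = 1 ∨ x u = -1) →
      -((5 * ε / 2) * gm A) ≤ ∑ u, ∑ v, A u v * x u * x v ∧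
      1 / 2 - (1 / (2 * gm A)) * ∑ u, ∑ v, A u v * x u * x v
        ≤ 1 / 2 + (5 / 4) * ε := by
  exact sa_maxcut_refutation_general A hA hA0 hrow ρ ε hρ hρε l k
    (hl ▸ Nat.le_ceil _) (hk ▸ Nat.le_ceil _) hop
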